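/- Let U be an N × N random unitary matrix distributed according to Haar measure on U(N). Then P[ max_{1 ≤ k ≤ N} |𝒩_{2πk/N} − k| > 6 log(eN) ] ≤ 2/(e³ N²). -/

import Mathlib

open MeasureTheory Real Filter

noncomputable section

/-- The Borel σ-algebra on the unitary group `U(N)`. -/
instance (N : ℕ) : MeasurableSpace (Matrix.unitaryGroup (Fin N) ℂ) := borel _

instance (N : ℕ) : BorelSpace (Matrix.unitaryGroup (Fin N) ℂ) := ⟨rfl⟩

/-- The eigenvalue angles (in `[0, 2π)`, with multiplicity) of a unitary matrix `U`:
the arguments of the roots of the characteristic polynomial, shifted to lie in `[0, 2π)`. -/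
def eigenAngles (N : ℕ) (U : Matrix.unitaryGroup (Fin N) ℂ) : Multiset ℝ :=
  ((U : Matrix (Fin N) (Fin N) ℂ).charpoly.roots).map
    (fun z => if 0 ≤ Complex.arg z then Complex.arg z else Complex.arg z + 2 * π)

open Classical in
/-- `𝒩_A`: the number of eigenvalue angles of `U` lying in the set `A`. -/
def countAngles (N : ℕ) (U : Matrix.unitaryGroup (Fin N) ℂ) (A : Set ℝ) : ℕ :=
  Multiset.card ((eigenAngles N U).filter (· ∈ A))

/-- `𝒩_θ`: the number of eigenvalue angles of `U` in `[0, θ]`. -/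
def countFun (N : ℕ) (U : Matrix.unitaryGroup (Fin N) ℂ) (θ : ℝ) : ℕ :=
  countAngles N U (Set.Icc 0 θ)

/-- The Kolmogorov distance between the empirical spectral measure of `U` and the
uniform measure on the circle: `sup_{0 ≤ θ < 2π} |𝒩_θ/N - θ/(2π)|`. -/
def dK (N : ℕ) (U : Matrix.unitaryGroup (Fin N) ℂ) : ℝ :=
  ⨆ θ : Set.Ico (0:ℝ) (2 * π), |(countFun N U θ : ℝ) / N - (θ : ℝ) / (2 * π)|

/-- `max_{1 ≤ k ≤ N} |𝒩_{2πk/N} - k|`. -/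
def maxDev (N : ℕ) (U : Matrix.unitaryGroup (Fin N) ℂ) : ℝ :=
  ⨆ k : (Finset.Icc 1 N : Finset ℕ), |(countFun N U (2 * π * (k : ℕ) / N) : ℝ) - ((k : ℕ) : ℝ)|

end

/-! Let `Φ A = phase A` be the continuous branch of `arg (det (1 - A))` on contractions.
Eliminating the first coordinate of `1 - U` gives `Φ U = arg (1 - U₀₀) + Φ V`, where the Schur
complement `1 - V` of `1 - U₀₀` comes from a unitary matrix `V` of size one less. Right translation
of `U` by `1 ⊕ W` fixes `U₀₀` and turns `V` into `V W`, so under Haar measure `V` is again Haar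
distributed and independent of `U₀₀`. As `arg (1 - U₀₀)` is centred by symmetry, bounded by
`π |U₀₀| / 2`, and `𝔼 |U₀₀|² = 1 / n`, its moment generating function at `± 1 / 2` is at most
`1 + 1 / n`; these bounds telescope to `𝔼 exp (± Φ U / 2) ≤ n + 1`.

Since `arg (1 - e^{iα}) = (α - π) / 2` for `0 < α < 2π`, almost surely
`𝒩_θ - N θ / (2π) = (Φ (e^{-iθ} U) - Φ U) / π`. The law of `U` is invariant under rotation, so a
union bound over the angles `2πk / N` concludes.
-/

section ArgOneSub

lemma one_sub_re_nonneg {w : ℂ} (hw : ‖w‖ ≤ 1) : 0 ≤ (1 - w).re := by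
  simpa only [Complex.sub_re, Complex.one_re, sub_nonneg] using (Complex.re_le_norm w).trans hw

lemma one_sub_re_pos {w : ℂ} (hw : ‖w‖ ≤ 1) (hw1 : w ≠ 1) : 0 < (1 - w).re := by
  refine (one_sub_re_nonneg hw).lt_of_ne' fun h ↦ hw1 ?_
  have hre : w.re = 1 := by
    rw [Complex.sub_re, Complex.one_re, sub_eq_zero] at h
    exact h.symm
  refine Complex.ext hre ?_
  have hsq := Complex.sq_norm_sub_sq_re w
  rw [hre] at hsq
  exact pow_eq_zero_iff two_ne_zero |>.mp (by nlinarith [sq_nonneg w.im, norm_nonneg w])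

lemma abs_arg_one_sub_le_pi_div_two {w : ℂ} (hw : ‖w‖ ≤ 1) : |Complex.arg (1 - w)| ≤ π / 2 :=
  Complex.abs_arg_le_pi_div_two_iff.mpr (one_sub_re_nonneg hw)

lemma abs_im_le_norm_mul_norm_one_sub (w : ℂ) : |w.im| ≤ ‖w‖ * ‖1 - w‖ := by
  refine abs_le_of_sq_le_sq ?_ (by positivity)
  rw [mul_pow, ← Complex.normSq_eq_norm_sq, ← Complex.normSq_eq_norm_sq, Complex.normSq_apply,
    Complex.normSq_apply]
  simp only [Complex.sub_re, Complex.sub_im, Complex.one_re, Complex.one_im]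
  nlinarith [sq_nonneg (w.re - (w.re * w.re + w.im * w.im))]

lemma abs_arg_one_sub_le {w : ℂ} (hw : ‖w‖ ≤ 1) : |Complex.arg (1 - w)| ≤ π / 2 * ‖w‖ := by
  rcases eq_or_ne w 1 with rfl | hw1
  · simpa using pi_div_two_pos.le
  have hpos : 0 < ‖1 - w‖ := norm_pos_iff.mpr (sub_ne_zero.mpr hw1.symm)
  have hsin : |sin (Complex.arg (1 - w))| ≤ ‖w‖ := by
    rw [Complex.sin_arg, abs_div, abs_norm, div_le_iff₀ hpos]
    simpa only [Complex.sub_im, Complex.one_im, zero_sub, abs_neg]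
      using abs_im_le_norm_mul_norm_one_sub w
  calc |Complex.arg (1 - w)| = π / 2 * (2 / π * |Complex.arg (1 - w)|) := by field_simp
    _ ≤ π / 2 * ‖w‖ := by
      gcongr
      exact (mul_abs_le_abs_sin (abs_arg_one_sub_le_pi_div_two hw)).trans hsin

lemma arg_one_sub_conj {w : ℂ} (hw : ‖w‖ ≤ 1) :
    Complex.arg (1 - star w) = -Complex.arg (1 - w) := by
  have hconj : 1 - star w = starRingEnd ℂ (1 - w) := by simp
  have harg : Complex.arg (1 - w) ≠ π := fun h ↦ by
    have := abs_arg_one_sub_le_pi_div_two hw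
    rw [h, abs_of_pos pi_pos] at this
    linarith [pi_pos]
  rw [hconj, Complex.arg_conj, if_neg harg]

lemma arg_one_sub_exp_mul_I {θ : ℝ} (h0 : 0 < θ) (h1 : θ < 2 * π) :
    Complex.arg (1 - Complex.exp (θ * Complex.I)) = (θ - π) / 2 := by
  have hsin : 0 < 2 * sin (θ / 2) := by
    have := sin_pos_of_pos_of_lt_pi (x := θ / 2) (by linarith) (by linarith)
    linarith
  have hpolar : 1 - Complex.exp (θ * Complex.I) = (2 * sin (θ / 2) : ℝ) *
      (Complex.cos ((θ - π) / 2 : ℝ) + Complex.sin ((θ - π) / 2 : ℝ) * Complex.I) := by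
    have hθ : (θ : ℂ) = 2 * (θ / 2 : ℝ) := by push_cast; ring
    have hhalf : (θ - π) / 2 = θ / 2 - π / 2 := by ring
    rw [Complex.exp_mul_I, hθ, Complex.cos_two_mul, Complex.sin_two_mul, ← Complex.ofReal_cos,
      ← Complex.ofReal_sin, ← Complex.ofReal_cos, ← Complex.ofReal_sin, hhalf,
      cos_sub_pi_div_two, sin_sub_pi_div_two]
    have hcs : ((cos (θ / 2) : ℝ) : ℂ) ^ 2 = 1 - (sin (θ / 2) : ℝ) ^ 2 := by
      exact_mod_cast cos_sq' (θ / 2)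
    push_cast at hcs ⊢
    linear_combination -2 * hcs
  rw [hpolar, Complex.arg_mul_cos_add_sin_mul_I hsin ⟨by linarith, by linarith [pi_pos]⟩]

end ArgOneSub

section Feedback

open scoped Matrix.Norms.L2Operator

variable {m : Type*} [Fintype m] [DecidableEq m]

lemma l2_opNorm_le_one_iff {A : Matrix m m ℂ} :
    ‖A‖ ≤ 1 ↔ ∀ v, ‖WithLp.toLp 2 (A.mulVec v)‖ ≤ ‖WithLp.toLp 2 v‖ := by
  refine ⟨fun hA v ↦ ?_, fun hA ↦ ?_⟩
  · exact (A.l2_opNorm_mulVec (WithLp.toLp 2 v)).trans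
      (mul_le_of_le_one_left (norm_nonneg _) hA)
  · rw [Matrix.l2_opNorm_def]
    exact ContinuousLinearMap.opNorm_le_bound _ zero_le_one fun v ↦
      (hA v.ofLp).trans_eq (one_mul _).symm

lemma mem_unitaryGroup_iff_norm_mulVec {A : Matrix m m ℂ} :
    A ∈ Matrix.unitaryGroup m ℂ ↔
      ∀ v, ‖WithLp.toLp 2 (A.mulVec v)‖ = ‖WithLp.toLp 2 v‖ := by
  let L := Matrix.toEuclideanCLM (n := m) (𝕜 := ℂ)
  calc A ∈ Matrix.unitaryGroup m ℂ
      ↔ star (L A) * L A = 1 := by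
        rw [Matrix.mem_unitaryGroup_iff', ← map_star, ← map_mul, ← map_one L,
          EmbeddingLike.apply_eq_iff_eq]
    _ ↔ ∀ x, ‖L A x‖ = ‖x‖ := (ContinuousLinearMap.norm_map_iff_adjoint_comp_self (L A)).symm
    _ ↔ ∀ v, ‖WithLp.toLp 2 (A.mulVec v)‖ = ‖WithLp.toLp 2 v‖ :=
        (WithLp.equiv 2 (m → ℂ)).forall_congr_left

lemma l2_opNorm_le_one_of_mem_unitaryGroup {A : Matrix m m ℂ}
    (hA : A ∈ Matrix.unitaryGroup m ℂ) : ‖A‖ ≤ 1 :=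
  l2_opNorm_le_one_iff.mpr fun v ↦ (mem_unitaryGroup_iff_norm_mulVec.mp hA v).le

variable {n : ℕ}

lemma norm_toLp_cons_sq (s : ℂ) (v : Fin n → ℂ) :
    ‖WithLp.toLp 2 (Fin.cons s v : Fin (n + 1) → ℂ)‖ ^ 2 = ‖s‖ ^ 2 + ‖WithLp.toLp 2 v‖ ^ 2 := by
  simp only [EuclideanSpace.norm_sq_eq, Fin.sum_univ_succ, Fin.cons_zero, Fin.cons_succ]

variable {A : Matrix (Fin (n + 1)) (Fin (n + 1)) ℂ}

lemma norm_sq_row_zero_le_one (hA : ‖A‖ ≤ 1) :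
    ‖A 0 0‖ ^ 2 + ‖WithLp.toLp 2 fun j : Fin n ↦ A 0 j.succ‖ ^ 2 ≤ 1 := by
  have hcol : A.conjTranspose.mulVec (Pi.single 0 1) =
      Fin.cons (star (A 0 0)) fun j ↦ star (A 0 j.succ) := by
    ext j
    refine Fin.cases ?_ (fun j ↦ ?_) j <;> simp
  have hnorm := l2_opNorm_le_one_iff.mp ((A.l2_opNorm_conjTranspose).trans_le hA) (Pi.single 0 1)
  rw [hcol] at hnorm
  have hsq := pow_le_pow_left₀ (norm_nonneg _) hnorm 2
  rw [norm_toLp_cons_sq] at hsq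
  simpa [EuclideanSpace.norm_sq_eq] using hsq

lemma norm_apply_zero_zero_le_one (hA : ‖A‖ ≤ 1) : ‖A 0 0‖ ≤ 1 := by
  nlinarith [norm_sq_row_zero_le_one hA, norm_nonneg (A 0 0),
    sq_nonneg ‖WithLp.toLp 2 fun j : Fin n ↦ A 0 j.succ‖]

lemma apply_zero_succ_eq_zero (hA : ‖A‖ ≤ 1) (h1 : A 0 0 = 1) (j : Fin n) : A 0 j.succ = 0 := by
  have hrow := norm_sq_row_zero_le_one hA
  rw [h1, norm_one] at hrow
  have h0 : ‖WithLp.toLp 2 fun j : Fin n ↦ A 0 j.succ‖ = 0 :=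
    pow_eq_zero_iff two_ne_zero |>.mp (le_antisymm (by linarith) (sq_nonneg _))
  exact congrFun (congrArg WithLp.ofLp (norm_eq_zero.mp h0)) j

/-- The matrix obtained from `A`, viewed as a linear system with `n + 1` inputs and outputs, by
closing the loop between output `0` and input `0`. When `A 0 0 ≠ 1`, the matrix `1 - feedback A` is
the Schur complement of the entry `1 - A 0 0` in `1 - A`; when `A 0 0 = 1`, the junk value
`0⁻¹ = 0` makes `feedback A` the lower right block of `A`. -/
noncomputable def feedback (A : Matrix (Fin (n + 1)) (Fin (n + 1)) ℂ) : Matrix (Fin n) (Fin n) ℂ :=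
  .of fun i j ↦ A i.succ j.succ + A i.succ 0 * (1 - A 0 0)⁻¹ * A 0 j.succ

lemma feedback_apply (A : Matrix (Fin (n + 1)) (Fin (n + 1)) ℂ) (i j : Fin n) :
    feedback A i j = A i.succ j.succ + A i.succ 0 * (1 - A 0 0)⁻¹ * A 0 j.succ :=
  rfl

lemma mulVec_cons_eq_cons_feedback (hA : ‖A‖ ≤ 1) (v : Fin n → ℂ) :
    ∃ s, A.mulVec (Fin.cons s v) = Fin.cons s ((feedback A).mulVec v) := by
  refine ⟨(1 - A 0 0)⁻¹ * ∑ j, A 0 j.succ * v j, ?_⟩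
  ext i
  refine Fin.cases ?_ (fun i ↦ ?_) i
  · rw [Matrix.mulVec, dotProduct, Fin.sum_univ_succ]
    simp only [Fin.cons_zero, Fin.cons_succ]
    rcases eq_or_ne (A 0 0) 1 with h1 | h1
    · simp [h1, apply_zero_succ_eq_zero hA h1]
    · have := sub_ne_zero.mpr h1.symm
      field_simp
      ring
  · rw [Matrix.mulVec, dotProduct, Fin.sum_univ_succ]
    simp only [Fin.cons_zero, Fin.cons_succ, Matrix.mulVec, dotProduct, feedback_apply, add_mul,
      Finset.sum_add_distrib, Finset.mul_sum]
    rw [add_comm]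
    simp only [mul_assoc]

lemma norm_feedback_le_one (hA : ‖A‖ ≤ 1) : ‖feedback A‖ ≤ 1 := by
  refine l2_opNorm_le_one_iff.mpr fun v ↦ ?_
  obtain ⟨s, hs⟩ := mulVec_cons_eq_cons_feedback hA v
  have h := pow_le_pow_left₀ (norm_nonneg _) (l2_opNorm_le_one_iff.mp hA (Fin.cons s v)) 2
  rw [hs, norm_toLp_cons_sq, norm_toLp_cons_sq] at h
  exact le_of_sq_le_sq (le_of_add_le_add_left h) (norm_nonneg _)

lemma feedback_mem_unitaryGroup (hA : A ∈ Matrix.unitaryGroup (Fin (n + 1)) ℂ) :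
    feedback A ∈ Matrix.unitaryGroup (Fin n) ℂ := by
  refine mem_unitaryGroup_iff_norm_mulVec.mpr fun v ↦ ?_
  obtain ⟨s, hs⟩ :=
    mulVec_cons_eq_cons_feedback (l2_opNorm_le_one_of_mem_unitaryGroup hA) v
  have h := congrArg (· ^ 2) (mem_unitaryGroup_iff_norm_mulVec.mp hA (Fin.cons s v))
  simp only [hs, norm_toLp_cons_sq, add_right_inj] at h
  exact (sq_eq_sq₀ (norm_nonneg _) (norm_nonneg _)).mp h

lemma det_one_sub_eq_mul_det_one_sub_feedback (h1 : A 0 0 ≠ 1) :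
    (1 - A).det = (1 - A 0 0) * (1 - feedback A).det := by
  have hne : 1 - A 0 0 ≠ 0 := sub_ne_zero.mpr h1.symm
  let B : Matrix (Fin (n + 1)) (Fin (n + 1)) ℂ :=
    .of <| Fin.cons ((1 - A) 0) fun i ↦ Fin.cons 0 ((1 - feedback A) i)
  have hAB : (1 - A).det = B.det := by
    refine Matrix.det_eq_of_forall_row_eq_smul_add_const
      (Fin.cons 0 fun i : Fin n ↦ -A i.succ 0 * (1 - A 0 0)⁻¹) 0 rfl fun i j ↦ ?_
    refine Fin.cases ?_ (fun i ↦ ?_) i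
    · simp [B]
    · refine Fin.cases ?_ (fun j ↦ ?_) j
      · simp [B, hne]
      · simp only [B, Matrix.of_apply, Matrix.sub_apply, Matrix.one_apply, Fin.cons_zero,
          Fin.cons_succ, Fin.succ_inj, (Fin.succ_ne_zero j).symm, if_false, feedback_apply]
        ring
  have hminor : B.submatrix (Fin.succAbove 0) Fin.succ = 1 - feedback A := by
    ext i j
    simp [B]
  have hcorner : B 0 0 = 1 - A 0 0 := by simp [B]
  have hcol (i : Fin n) : B i.succ 0 = 0 := by simp [B]
  simp only [hAB, Matrix.det_succ_column_zero B, Fin.sum_univ_succ, hminor, hcorner, hcol,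
    Fin.val_zero, pow_zero, one_mul, mul_zero, zero_mul, Finset.sum_const_zero, add_zero]

lemma apply_zero_zero_ne_one (hA : ‖A‖ ≤ 1) (hdet : (1 - A).det ≠ 0) : A 0 0 ≠ 1 := fun h1 ↦
  hdet <| Matrix.det_eq_zero_of_row_eq_zero 0 <| Fin.cases (by simp [h1])
    fun j ↦ by simp [apply_zero_succ_eq_zero hA h1 j, (Fin.succ_ne_zero j).symm]

lemma det_one_sub_feedback_ne_zero (hA : ‖A‖ ≤ 1) (hdet : (1 - A).det ≠ 0) :
    (1 - feedback A).det ≠ 0 := by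
  rw [det_one_sub_eq_mul_det_one_sub_feedback (apply_zero_zero_ne_one hA hdet)] at hdet
  exact right_ne_zero_of_mul hdet

end Feedback

section CharpolyRoots

open scoped Matrix.Norms.L2Operator

variable {m : Type*} [Fintype m] [DecidableEq m] {A : Matrix m m ℂ}

lemma card_roots_charpoly (A : Matrix m m ℂ) : A.charpoly.roots.card = Fintype.card m := by
  rw [← (IsAlgClosed.splits A.charpoly).natDegree_eq_card_roots, A.charpoly_natDegree_eq_dim]

lemma det_one_sub_smul_eq_prod_roots (A : Matrix m m ℂ) (c : ℂ) :
    (1 - c • A).det = (A.charpoly.roots.map fun z ↦ 1 - c * z).prod := by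
  rcases eq_or_ne c 0 with rfl | hc
  · simp
  have hscalar : 1 - c • A = c • (Matrix.scalar m c⁻¹ - A) := by
    rw [smul_sub, Matrix.scalar_apply, ← Matrix.smul_one_eq_diagonal, smul_smul,
      mul_inv_cancel₀ hc, one_smul]
  calc (1 - c • A).det = c ^ Fintype.card m * A.charpoly.eval c⁻¹ := by
        rw [hscalar, Matrix.det_smul, Matrix.eval_charpoly]
    _ = c ^ Fintype.card m * (A.charpoly.roots.map fun z ↦ c⁻¹ - z).prod := by
        rw [(IsAlgClosed.splits A.charpoly).eval_eq_prod_roots_of_monic A.charpoly_monic]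
    _ = (A.charpoly.roots.map fun z ↦ c * (c⁻¹ - z)).prod := by
        rw [Multiset.prod_map_mul, Multiset.map_const', Multiset.prod_replicate,
          card_roots_charpoly]
    _ = (A.charpoly.roots.map fun z ↦ 1 - c * z).prod := by
        simp only [mul_sub, mul_inv_cancel₀ hc]

lemma norm_le_one_of_mem_roots_charpoly (hA : ‖A‖ ≤ 1) {z : ℂ} (hz : z ∈ A.charpoly.roots) :
    ‖z‖ ≤ 1 := by
  have hspec := Matrix.mem_spectrum_iff_isRoot_charpoly.mpr (Polynomial.isRoot_of_mem_roots hz)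
  have hone := l2_opNorm_le_one_of_mem_unitaryGroup (one_mem (Matrix.unitaryGroup m ℂ))
  exact (spectrum.norm_le_norm_mul_of_mem hspec).trans (mul_le_one₀ hA (norm_nonneg _) hone)

lemma norm_eq_one_of_mem_roots_charpoly (hA : A ∈ Matrix.unitaryGroup m ℂ) {z : ℂ}
    (hz : z ∈ A.charpoly.roots) : ‖z‖ = 1 :=
  spectrum.norm_eq_one_of_unitary hA <|
    Matrix.mem_spectrum_iff_isRoot_charpoly.mpr (Polynomial.isRoot_of_mem_roots hz)

lemma det_one_sub_smul_ne_zero_iff (c : ℂ) :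
    (1 - c • A).det ≠ 0 ↔ ∀ z ∈ A.charpoly.roots, c * z ≠ 1 := by
  simp only [det_one_sub_smul_eq_prod_roots, ne_eq, Multiset.prod_eq_zero_iff, Multiset.mem_map,
    sub_eq_zero, eq_comm (a := (1 : ℂ)), not_exists, not_and]

end CharpolyRoots

section Phase

open scoped Matrix.Norms.L2Operator

/-- The argument of `det (1 - A)` for a contraction `A`, chosen continuously and vanishing at
`A = 0`: every feedback step splits off a factor `1 - A 0 0`, which lies in the right half plane,
where the principal argument is continuous. -/
noncomputable def phase : {n : ℕ} → Matrix (Fin n) (Fin n) ℂ → ℝ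
  | 0, _ => 0
  | _ + 1, A => Complex.arg (1 - A 0 0) + phase (feedback A)

lemma phase_succ {n : ℕ} (A : Matrix (Fin (n + 1)) (Fin (n + 1)) ℂ) :
    phase A = Complex.arg (1 - A 0 0) + phase (feedback A) :=
  rfl

lemma phase_zero : ∀ n : ℕ, phase (0 : Matrix (Fin n) (Fin n) ℂ) = 0
  | 0 => rfl
  | n + 1 => by
    have hfeedback : feedback (0 : Matrix (Fin (n + 1)) (Fin (n + 1)) ℂ) = 0 := by
      ext i j
      simp [feedback_apply]
    simp [phase_succ, hfeedback, phase_zero n]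

lemma coe_phase_eq_arg_det {n : ℕ} {A : Matrix (Fin n) (Fin n) ℂ} (hA : ‖A‖ ≤ 1)
    (hdet : (1 - A).det ≠ 0) : (phase A : Real.Angle) = Complex.arg (1 - A).det := by
  induction n with
  | zero => simp [phase]
  | succ n ih =>
    have h1 := apply_zero_zero_ne_one hA hdet
    have hdet' := det_one_sub_feedback_ne_zero hA hdet
    rw [phase_succ, Real.Angle.coe_add, ih (norm_feedback_le_one hA) hdet',
      det_one_sub_eq_mul_det_one_sub_feedback h1,
      Complex.arg_mul_coe_angle (sub_ne_zero.mpr h1.symm) hdet']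

lemma continuous_phase {X : Type*} [TopologicalSpace X] {n : ℕ} {A : X → Matrix (Fin n) (Fin n) ℂ}
    (hcont : ∀ i j, Continuous fun x ↦ A x i j) (hA : ∀ x, ‖A x‖ ≤ 1)
    (hdet : ∀ x, (1 - A x).det ≠ 0) : Continuous fun x ↦ phase (A x) := by
  induction n with
  | zero => exact continuous_const
  | succ n ih =>
    have h1 x := apply_zero_zero_ne_one (hA x) (hdet x)
    have hentry : Continuous fun x ↦ 1 - A x 0 0 := continuous_const.sub (hcont 0 0)
    have harg : Continuous fun x ↦ Complex.arg (1 - A x 0 0) :=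
      continuous_iff_continuousAt.mpr fun x ↦
        (Complex.continuousAt_arg <| Or.inl <| one_sub_re_pos (norm_apply_zero_zero_le_one (hA x))
          (h1 x)).comp (f := fun x ↦ 1 - A x 0 0) hentry.continuousAt
    refine harg.add (ih (fun i j ↦ ?_) (fun x ↦ norm_feedback_le_one (hA x))
      fun x ↦ det_one_sub_feedback_ne_zero (hA x) (hdet x))
    exact (hcont _ _).add (((hcont _ _).mul
      (hentry.inv₀ fun x ↦ sub_ne_zero.mpr (h1 x).symm)).mul (hcont _ _))

lemma measurable_phase {X : Type*} [MeasurableSpace X] {n : ℕ} {A : X → Matrix (Fin n) (Fin n) ℂ}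
    (hmeas : ∀ i j, Measurable fun x ↦ A x i j) : Measurable fun x ↦ phase (A x) := by
  induction n with
  | zero => exact measurable_const
  | succ n ih =>
    have hentry : Measurable fun x ↦ 1 - A x 0 0 := measurable_const.sub (hmeas 0 0)
    exact (Complex.measurable_arg.comp hentry).add <| ih fun i j ↦
      (hmeas _ _).add (((hmeas _ _).mul hentry.inv).mul (hmeas _ _))

variable {n : ℕ} {A : Matrix (Fin n) (Fin n) ℂ}

lemma coe_sum_arg_eq_arg_prod (s : Multiset ℂ) (hs : s.prod ≠ 0) :
    ((s.map Complex.arg).sum : Real.Angle) = Complex.arg s.prod := by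
  induction s using Multiset.induction with
  | empty => simp
  | cons z s ih =>
    rw [Multiset.prod_cons] at hs
    rw [Multiset.map_cons, Multiset.sum_cons, Multiset.prod_cons, Real.Angle.coe_add,
      ih (right_ne_zero_of_mul hs),
      Complex.arg_mul_coe_angle (left_ne_zero_of_mul hs) (right_ne_zero_of_mul hs)]

lemma eq_of_continuous_of_coe_angle_eq {X : Type*} [TopologicalSpace X] [PreconnectedSpace X]
    {f g : X → ℝ} (hf : Continuous f) (hg : Continuous g)
    (hangle : ∀ x, (f x : Real.Angle) = g x) {x₀ : X} (h0 : f x₀ = g x₀) : f = g := by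
  have hmaps : Set.MapsTo (f - g) Set.univ (AddSubgroup.zmultiples (2 * π) : Set ℝ) := fun x _ ↦
    (QuotientAddGroup.eq_zero_iff (f x - g x)).mp (sub_eq_zero.mpr (hangle x))
  funext x
  have hconst := isPreconnected_univ.constant_of_mapsTo
    (SetLike.isDiscrete_iff_discreteTopology.mpr inferInstance) (hf.sub hg).continuousOn hmaps
    (Set.mem_univ x) (Set.mem_univ x₀)
  rwa [Pi.sub_apply, Pi.sub_apply, h0, sub_self, sub_eq_zero] at hconst

lemma continuous_sum_arg_one_sub {X : Type*} [TopologicalSpace X] (s : Multiset ℂ) {c : X → ℂ}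
    (hc : Continuous c) (hle : ∀ x, ∀ z ∈ s, ‖c x * z‖ ≤ 1) (hne : ∀ x, ∀ z ∈ s, c x * z ≠ 1) :
    Continuous fun x ↦ (s.map fun z ↦ Complex.arg (1 - c x * z)).sum :=
  continuous_multiset_sum _ fun z hz ↦ continuous_iff_continuousAt.mpr fun x ↦
    (Complex.continuousAt_arg <| Or.inl <| one_sub_re_pos (hle x z hz) (hne x z hz)).comp
      (f := fun x ↦ 1 - c x * z) (by fun_prop)

lemma ofReal_mul_ne_one {t : ℝ} (ht0 : 0 ≤ t) (ht1 : t ≤ 1) {w : ℂ} (hw : ‖w‖ ≤ 1)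
    (hw1 : w ≠ 1) : t * w ≠ 1 := fun h ↦ by
  have hnorm : t * ‖w‖ = 1 := by
    simpa only [norm_mul, Complex.norm_real, norm_of_nonneg ht0, norm_one] using congrArg norm h
  have ht : t = 1 := by nlinarith [norm_nonneg w]
  exact hw1 (by simpa only [ht, Complex.ofReal_one, one_mul] using h)

/- The two sides are lifts of `arg (det (1 - t * c • A))`, continuous in `t ∈ [0, 1]`, that agree
at `t = 0`. -/
lemma phase_smul_eq_sum_arg (hA : ‖A‖ ≤ 1) {c : ℂ} (hc : ‖c‖ ≤ 1)
    (hdet : (1 - c • A).det ≠ 0) :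
    phase (c • A) = (A.charpoly.roots.map fun z ↦ Complex.arg (1 - c * z)).sum := by
  let γ : unitInterval → ℂ := fun t ↦ (t : ℝ) * c
  have hγ : Continuous γ := by fun_prop
  have hγ_le t : ‖γ t‖ ≤ 1 := by
    rw [norm_mul, Complex.norm_real, norm_of_nonneg t.2.1]
    exact mul_le_one₀ t.2.2 (norm_nonneg _) hc
  have hnorm t : ‖γ t • A‖ ≤ 1 :=
    (norm_smul _ _).trans_le (mul_le_one₀ (hγ_le t) (norm_nonneg _) hA)
  have hle {b : ℂ} (hb : ‖b‖ ≤ 1) : ∀ z ∈ A.charpoly.roots, ‖b * z‖ ≤ 1 := fun z hz ↦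
    (norm_mul _ _).trans_le
      (mul_le_one₀ hb (norm_nonneg _) (norm_le_one_of_mem_roots_charpoly hA hz))
  have hne t : ∀ z ∈ A.charpoly.roots, γ t * z ≠ 1 := fun z hz ↦ by
    rw [mul_assoc]
    exact ofReal_mul_ne_one t.2.1 t.2.2 (hle hc z hz)
      ((det_one_sub_smul_ne_zero_iff c).mp hdet z hz)
  have hdetγ t : (1 - γ t • A).det ≠ 0 := (det_one_sub_smul_ne_zero_iff _).mpr (hne t)
  have hphase : Continuous fun t ↦ phase (γ t • A) :=
    continuous_phase (fun i j ↦ hγ.mul continuous_const) hnorm hdetγ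
  have hsum := continuous_sum_arg_one_sub _ hγ (fun t ↦ hle (hγ_le t)) hne
  have hangle t : (phase (γ t • A) : Real.Angle) =
      ((A.charpoly.roots.map fun z ↦ Complex.arg (1 - γ t * z)).sum : ℝ) := by
    have hprod := det_one_sub_smul_eq_prod_roots A (γ t) ▸ hdetγ t
    rw [coe_phase_eq_arg_det (hnorm t) (hdetγ t), det_one_sub_smul_eq_prod_roots,
      ← coe_sum_arg_eq_arg_prod _ hprod, Multiset.map_map]
    rfl
  have h0 : phase (γ 0 • A) = (A.charpoly.roots.map fun z ↦ Complex.arg (1 - γ 0 * z)).sum := by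
    simp [γ, phase_zero]
  simpa [γ] using congrFun (eq_of_continuous_of_coe_angle_eq hphase hsum hangle h0) 1

end Phase

section CompactGroup

variable {G H : Type*} [Group G] [Group H]

section Haar

variable [TopologicalSpace G] [IsTopologicalGroup G] [CompactSpace G] [MeasurableSpace G]
  [BorelSpace G]

lemma isMulRightInvariant_of_isHaarMeasure (μ : Measure G) [IsProbabilityMeasure μ]
    [μ.IsHaarMeasure] : μ.IsMulRightInvariant := by
  refine ⟨fun g ↦ ?_⟩
  have : IsProbabilityMeasure (μ.map (· * g)) :=
    Measure.isProbabilityMeasure_map (continuous_mul_const g).measurable.aemeasurable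
  exact Measure.isHaarMeasure_eq_of_isProbabilityMeasure _ _

lemma isInvInvariant_of_isHaarMeasure (μ : Measure G) [IsProbabilityMeasure μ]
    [μ.IsHaarMeasure] : μ.IsInvInvariant := by
  have := isMulRightInvariant_of_isHaarMeasure μ
  have : IsProbabilityMeasure μ.inv :=
    Measure.isProbabilityMeasure_map continuous_inv.measurable.aemeasurable
  have : μ.inv.IsHaarMeasure :=
    Measure.isHaarMeasure_of_isCompact_nonempty_interior _ Set.univ isCompact_univ (by simp)
      (by simp) (by simp)
  exact ⟨Measure.isHaarMeasure_eq_of_isProbabilityMeasure _ _⟩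

lemma isProbabilityMeasure_haarMeasure_top :
    IsProbabilityMeasure (Measure.haarMeasure (⊤ : TopologicalSpace.PositiveCompacts G)) :=
  ⟨by simpa using Measure.haarMeasure_self (K₀ := (⊤ : TopologicalSpace.PositiveCompacts G))⟩

end Haar

variable [MeasurableSpace G] [MeasurableSpace H] [MeasurableMul₂ G] [MeasurableMul₂ H]
  {μ : Measure G} {ν : Measure H} {p : G → H} {ι : H → G}

/- Averaging over the right translations by `ι h` leaves `s` alone and spreads `p` out over `ν`. -/
lemma measure_inter_preimage_eq_mul_of_map_mul [SFinite μ] [μ.IsMulRightInvariant]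
    [IsProbabilityMeasure ν] [ν.IsMulLeftInvariant] (hp : Measurable p) (hι : Measurable ι)
    (hmul : ∀ g h, p (g * ι h) = p g * h) {s : Set G} (hs : MeasurableSet s)
    (hinv : ∀ g h, g * ι h ∈ s ↔ g ∈ s) {t : Set H} (ht : MeasurableSet t) :
    μ (s ∩ p ⁻¹' t) = μ s * ν t := by
  let E : Set (G × H) := {x | x.1 * ι x.2 ∈ s ∩ p ⁻¹' t}
  have hE : MeasurableSet E :=
    (hs.inter (hp ht)).preimage (measurable_fst.mul (hι.comp measurable_snd))
  have hslice g : ν (Prod.mk g ⁻¹' E) = s.indicator (fun _ ↦ ν t) g := by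
    by_cases hg : g ∈ s
    · have hset : Prod.mk g ⁻¹' E = (p g * ·) ⁻¹' t := by
        ext h
        simp [E, hinv, hmul, hg]
      rw [hset, measure_preimage_mul, Set.indicator_of_mem hg]
    · have hset : Prod.mk g ⁻¹' E = ∅ := by
        ext h
        simp [E, hinv, hg]
      rw [hset, measure_empty, Set.indicator_of_notMem hg]
  calc μ (s ∩ p ⁻¹' t)
      = ∫⁻ h, μ ((· * ι h) ⁻¹' (s ∩ p ⁻¹' t)) ∂ν := by
        simp only [measure_preimage_mul_right, lintegral_const, measure_univ, mul_one]
    _ = ∫⁻ g, ν (Prod.mk g ⁻¹' E) ∂μ := by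
        rw [← Measure.prod_apply hE, Measure.prod_apply_symm hE]
        rfl
    _ = μ s * ν t := by
        simp only [hslice, lintegral_indicator_const hs, mul_comm]

variable [IsProbabilityMeasure μ] [μ.IsMulRightInvariant] [IsProbabilityMeasure ν]
  [ν.IsMulLeftInvariant]

lemma map_eq_of_map_mul (hp : Measurable p) (hι : Measurable ι)
    (hmul : ∀ g h, p (g * ι h) = p g * h) : μ.map p = ν := by
  ext t ht
  have h := measure_inter_preimage_eq_mul_of_map_mul (μ := μ) (ν := ν) hp hι hmul .univ
    (fun _ _ ↦ Iff.rfl) ht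
  rwa [Set.univ_inter, measure_univ, one_mul, ← Measure.map_apply hp ht] at h

lemma indepFun_of_map_mul (ν : Measure H) [IsProbabilityMeasure ν] [ν.IsMulLeftInvariant]
    (hp : Measurable p) (hι : Measurable ι) (hmul : ∀ g h, p (g * ι h) = p g * h) {α : Type*}
    [MeasurableSpace α] {f : G → α} (hf : Measurable f) (hinv : ∀ g h, f (g * ι h) = f g) :
    ProbabilityTheory.IndepFun f p μ := by
  refine ProbabilityTheory.indepFun_iff_measure_inter_preimage_eq_mul.mpr fun s t hs ht ↦ ?_
  rw [measure_inter_preimage_eq_mul_of_map_mul (ν := ν) hp hι hmul (hf hs)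
    (fun g h ↦ by simp only [Set.mem_preimage, hinv]) ht, ← Measure.map_apply hp ht,
    map_eq_of_map_mul (ν := ν) hp hι hmul]

end CompactGroup

section UnitaryGroup

variable {m : Type*} [Fintype m] [DecidableEq m]

lemma isCompact_unitaryGroup :
    IsCompact (Matrix.unitaryGroup m ℂ : Set (Matrix m m ℂ)) := by
  have hbox : IsCompact
      (Set.univ.pi fun _ : m ↦ Set.univ.pi fun _ : m ↦ Metric.closedBall (0 : ℂ) 1) :=
    isCompact_univ_pi fun _ ↦ isCompact_univ_pi fun _ ↦ isCompact_closedBall _ _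
  have hset : (Matrix.unitaryGroup m ℂ : Set (Matrix m m ℂ)) =
      {A | star A * A = 1} := Set.ext fun _ ↦ Matrix.mem_unitaryGroup_iff'
  have hclosed : IsClosed (Matrix.unitaryGroup m ℂ : Set (Matrix m m ℂ)) :=
    hset ▸ isClosed_eq (by fun_prop) continuous_const
  exact hbox.of_isClosed_subset (X := m → m → ℂ) hclosed fun A hA i _ j _ ↦
    mem_closedBall_zero_iff.mpr (entry_norm_bound_of_unitary hA i j)

instance : CompactSpace (Matrix.unitaryGroup m ℂ) :=
  isCompact_iff_compactSpace.mp isCompact_unitaryGroup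

instance : SecondCountableTopology (Matrix.unitaryGroup m ℂ) :=
  have : SecondCountableTopology (Matrix m m ℂ) :=
    inferInstanceAs (SecondCountableTopology (m → m → ℂ))
  TopologicalSpace.Subtype.secondCountableTopology _

variable {n : ℕ}

lemma measurable_unitaryGroup_apply (i j : Fin n) :
    Measurable fun U : Matrix.unitaryGroup (Fin n) ℂ ↦ U i j :=
  (continuous_subtype_val.matrix_elem i j).measurable

lemma measurable_to_unitaryGroup {X : Type*} [MeasurableSpace X]
    {f : X → Matrix.unitaryGroup (Fin n) ℂ} (hf : ∀ i j, Measurable fun x ↦ f x i j) :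
    Measurable f := by
  refine measurable_of_isOpen fun s hs ↦ ?_
  obtain ⟨t, ht, rfl⟩ := isOpen_induced_iff.mp hs
  have hpi : Measurable fun x ↦ (fun i j ↦ f x i j : Fin n → Fin n → ℂ) :=
    measurable_pi_iff.mpr fun i ↦ measurable_pi_iff.mpr fun j ↦ hf i j
  exact hpi (IsOpen.measurableSet (α := Fin n → Fin n → ℂ) ht)

/-- The feedback map on unitary groups. It carries Haar measure to Haar measure, and its value is
independent of the corner entry `U 0 0`. -/
noncomputable def unitaryFeedback (U : Matrix.unitaryGroup (Fin (n + 1)) ℂ) :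
    Matrix.unitaryGroup (Fin n) ℂ :=
  ⟨feedback U, feedback_mem_unitaryGroup U.2⟩

lemma measurable_unitaryFeedback : Measurable (unitaryFeedback (n := n)) :=
  measurable_to_unitaryGroup fun _ _ ↦
    (measurable_unitaryGroup_apply _ _).add <| ((measurable_unitaryGroup_apply _ _).mul
      (measurable_const.sub (measurable_unitaryGroup_apply _ _)).inv).mul
      (measurable_unitaryGroup_apply _ _)

/-- The block diagonal matrix `1 ⊕ V`. -/
def oneBlock (V : Matrix (Fin n) (Fin n) ℂ) : Matrix (Fin (n + 1)) (Fin (n + 1)) ℂ :=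
  .of <| Fin.cons (Fin.cons 1 0) fun i ↦ Fin.cons 0 (V i)

lemma mul_oneBlock_apply_zero (A : Matrix (Fin (n + 1)) (Fin (n + 1)) ℂ)
    (V : Matrix (Fin n) (Fin n) ℂ) (i : Fin (n + 1)) : (A * oneBlock V) i 0 = A i 0 := by
  simp [Matrix.mul_apply, Fin.sum_univ_succ, oneBlock]

lemma mul_oneBlock_apply_succ (A : Matrix (Fin (n + 1)) (Fin (n + 1)) ℂ)
    (V : Matrix (Fin n) (Fin n) ℂ) (i : Fin (n + 1)) (j : Fin n) :
    (A * oneBlock V) i j.succ = ∑ k, A i k.succ * V k j := by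
  simp [Matrix.mul_apply, Fin.sum_univ_succ, oneBlock]

lemma feedback_mul_oneBlock (A : Matrix (Fin (n + 1)) (Fin (n + 1)) ℂ)
    (V : Matrix (Fin n) (Fin n) ℂ) : feedback (A * oneBlock V) = feedback A * V := by
  ext i j
  simp only [Matrix.mul_apply (M := feedback A), feedback_apply, mul_oneBlock_apply_zero,
    mul_oneBlock_apply_succ, add_mul, Finset.sum_add_distrib, Finset.mul_sum, mul_assoc]

lemma oneBlock_mulVec_cons (V : Matrix (Fin n) (Fin n) ℂ) (s : ℂ) (v : Fin n → ℂ) :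
    (oneBlock V).mulVec (Fin.cons s v) = Fin.cons s (V.mulVec v) := by
  ext i
  refine Fin.cases ?_ (fun i ↦ ?_) i <;>
    simp [Matrix.mulVec, dotProduct, Fin.sum_univ_succ, oneBlock]

lemma oneBlock_mem_unitaryGroup {V : Matrix (Fin n) (Fin n) ℂ}
    (hV : V ∈ Matrix.unitaryGroup (Fin n) ℂ) :
    oneBlock V ∈ Matrix.unitaryGroup (Fin (n + 1)) ℂ := by
  refine mem_unitaryGroup_iff_norm_mulVec.mpr fun v ↦ ?_
  rw [← Fin.cons_self_tail v, oneBlock_mulVec_cons,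
    ← sq_eq_sq₀ (norm_nonneg _) (norm_nonneg _), norm_toLp_cons_sq, norm_toLp_cons_sq,
    mem_unitaryGroup_iff_norm_mulVec.mp hV]

/-- The embedding `V ↦ 1 ⊕ V` of `U(n)` into `U(n + 1)`. -/
def unitaryOneBlock (V : Matrix.unitaryGroup (Fin n) ℂ) : Matrix.unitaryGroup (Fin (n + 1)) ℂ :=
  ⟨oneBlock V, oneBlock_mem_unitaryGroup V.2⟩

lemma measurable_unitaryOneBlock : Measurable (unitaryOneBlock (n := n)) :=
  measurable_to_unitaryGroup <| Fin.cases (Fin.cases measurable_const fun _ ↦ measurable_const)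
    fun i ↦ Fin.cases measurable_const fun j ↦ measurable_unitaryGroup_apply i j

lemma unitaryFeedback_mul_unitaryOneBlock (U : Matrix.unitaryGroup (Fin (n + 1)) ℂ)
    (V : Matrix.unitaryGroup (Fin n) ℂ) :
    unitaryFeedback (U * unitaryOneBlock V) = unitaryFeedback U * V :=
  Subtype.ext (feedback_mul_oneBlock U.1 V.1)

lemma map_unitaryFeedback (μ : Measure (Matrix.unitaryGroup (Fin (n + 1)) ℂ))
    [IsProbabilityMeasure μ] [μ.IsHaarMeasure] (ν : Measure (Matrix.unitaryGroup (Fin n) ℂ))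
    [IsProbabilityMeasure ν] [ν.IsHaarMeasure] : μ.map unitaryFeedback = ν :=
  have := isMulRightInvariant_of_isHaarMeasure μ
  map_eq_of_map_mul measurable_unitaryFeedback measurable_unitaryOneBlock
    unitaryFeedback_mul_unitaryOneBlock

lemma indepFun_apply_zero_zero_unitaryFeedback
    (μ : Measure (Matrix.unitaryGroup (Fin (n + 1)) ℂ)) [IsProbabilityMeasure μ]
    [μ.IsHaarMeasure] : ProbabilityTheory.IndepFun (fun U ↦ U 0 0) unitaryFeedback μ :=
  have := isMulRightInvariant_of_isHaarMeasure μ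
  have := isProbabilityMeasure_haarMeasure_top (G := Matrix.unitaryGroup (Fin n) ℂ)
  indepFun_of_map_mul (Measure.haarMeasure ⊤) measurable_unitaryFeedback
    measurable_unitaryOneBlock unitaryFeedback_mul_unitaryOneBlock
    (measurable_unitaryGroup_apply 0 0) fun U V ↦ mul_oneBlock_apply_zero U.1 V.1 0

end UnitaryGroup

section Moments

open ProbabilityTheory

variable {n : ℕ}

lemma sum_norm_sq_unitaryGroup_apply (U : Matrix.unitaryGroup (Fin n) ℂ) (j : Fin n) :
    ∑ i, ‖U i j‖ ^ 2 = 1 := by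
  have hnorm := mem_unitaryGroup_iff_norm_mulVec.mp U.2 (Pi.single j 1)
  have hsq := congrArg (· ^ 2) hnorm
  simpa [Matrix.mulVec_single_one, EuclideanSpace.norm_sq_eq, Pi.single_apply, apply_ite norm,
    ite_pow] using hsq

/-- The permutation matrix of `σ` as a unitary matrix. -/
noncomputable def unitaryPerm (σ : Equiv.Perm (Fin n)) : Matrix.unitaryGroup (Fin n) ℂ :=
  ⟨σ.permMatrix ℂ, by
    rw [Matrix.mem_unitaryGroup_iff, Matrix.star_eq_conjTranspose, Matrix.conjTranspose_permMatrix,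
      ← Matrix.permMatrix_mul, inv_mul_cancel, Matrix.permMatrix_one]⟩

lemma unitaryPerm_mul_apply (σ : Equiv.Perm (Fin n)) (U : Matrix.unitaryGroup (Fin n) ℂ)
    (i j : Fin n) : (unitaryPerm σ * U) i j = U (σ i) j := by
  change (σ.permMatrix ℂ * U.1) i j = U (σ i) j
  rw [Equiv.Perm.permMatrix, PEquiv.toMatrix_toPEquiv_mul]
  rfl

lemma measurable_phase_unitaryGroup :
    Measurable fun U : Matrix.unitaryGroup (Fin n) ℂ ↦ phase U.1 :=
  measurable_phase measurable_unitaryGroup_apply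

variable (μ : Measure (Matrix.unitaryGroup (Fin n) ℂ))

lemma integrable_norm_sq_apply [IsFiniteMeasure μ] (i j : Fin n) :
    Integrable (fun U ↦ ‖U i j‖ ^ 2) μ :=
  .of_bound ((measurable_unitaryGroup_apply i j).norm.pow_const 2).aestronglyMeasurable 1 <|
    .of_forall fun U ↦ by
      rw [norm_pow, norm_norm]
      exact pow_le_one₀ (norm_nonneg _) (entry_norm_bound_of_unitary U.2 i j)

lemma measurable_arg_one_sub_apply (i : Fin n) :
    Measurable fun U : Matrix.unitaryGroup (Fin n) ℂ ↦ Complex.arg (1 - U i i) :=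
  Complex.measurable_arg.comp (measurable_const.sub (measurable_unitaryGroup_apply i i))

lemma integrable_arg_one_sub_apply [IsFiniteMeasure μ] (i : Fin n) :
    Integrable (fun U ↦ Complex.arg (1 - U i i)) μ :=
  .of_bound (measurable_arg_one_sub_apply i).aestronglyMeasurable π <|
    .of_forall fun _ ↦ Complex.abs_arg_le_pi _

variable [IsProbabilityMeasure μ] [μ.IsHaarMeasure]

lemma integral_norm_sq_apply (i j : Fin n) : ∫ U, ‖U i j‖ ^ 2 ∂μ = 1 / n := by
  have hperm k : ∫ U, ‖U k j‖ ^ 2 ∂μ = ∫ U, ‖U i j‖ ^ 2 ∂μ := by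
    rw [← integral_mul_left_eq_self _ (unitaryPerm (Equiv.swap i k))]
    simp only [unitaryPerm_mul_apply, Equiv.swap_apply_right]
  have hsum : n * ∫ U, ‖U i j‖ ^ 2 ∂μ = 1 := by
    calc n * ∫ U, ‖U i j‖ ^ 2 ∂μ = ∑ k, ∫ U, ‖U k j‖ ^ 2 ∂μ := by
          simp only [hperm, Finset.sum_const, Finset.card_univ, Fintype.card_fin, nsmul_eq_mul]
      _ = ∫ U, ∑ k, ‖U k j‖ ^ 2 ∂μ :=
          (integral_finsetSum _ fun k _ ↦ integrable_norm_sq_apply μ k j).symm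
      _ = 1 := by
          simp only [sum_norm_sq_unitaryGroup_apply, integral_const, probReal_univ, one_smul]
  exact eq_one_div_of_mul_eq_one_right hsum

lemma integral_arg_one_sub_apply (i : Fin n) : ∫ U, Complex.arg (1 - U i i) ∂μ = 0 := by
  have := isInvInvariant_of_isHaarMeasure μ
  have hinv := integral_inv_eq_self (fun U ↦ Complex.arg (1 - U i i)) μ
  have hconj (U : Matrix.unitaryGroup (Fin n) ℂ) :
      Complex.arg (1 - U⁻¹ i i) = -Complex.arg (1 - U i i) :=
    arg_one_sub_conj (entry_norm_bound_of_unitary U.2 i i)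
  simp only [hconj, integral_neg] at hinv
  linarith

lemma exp_mul_arg_one_sub_le {w : ℂ} (hw : ‖w‖ ≤ 1) {t : ℝ} (ht : |t| ≤ 1 / 2) :
    exp (t * Complex.arg (1 - w)) ≤ 1 + t * Complex.arg (1 - w) + ‖w‖ ^ 2 := by
  have hle : |t * Complex.arg (1 - w)| ≤ ‖w‖ := by
    calc |t * Complex.arg (1 - w)| = |t| * |Complex.arg (1 - w)| := abs_mul _ _
      _ ≤ 1 / 2 * (π / 2 * ‖w‖) :=
          mul_le_mul ht (abs_arg_one_sub_le hw) (abs_nonneg _) (by norm_num)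
      _ ≤ ‖w‖ := by nlinarith [pi_le_four, norm_nonneg w]
  have hexp := (abs_le.mp (abs_exp_sub_one_sub_id_le (hle.trans hw))).2
  have hsq := pow_le_pow_left₀ (abs_nonneg _) hle 2
  rw [sq_abs] at hsq
  linarith

lemma mgf_arg_one_sub_apply_le (i : Fin n) {t : ℝ} (ht : |t| ≤ 1 / 2) :
    mgf (fun U ↦ Complex.arg (1 - U i i)) μ t ≤ 1 + 1 / n := by
  have harg := (integrable_arg_one_sub_apply μ i).const_mul t
  have hlin : Integrable (fun U ↦ 1 + t * Complex.arg (1 - U i i)) μ :=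
    (integrable_const 1).add harg
  have hsq := integrable_norm_sq_apply μ i i
  calc mgf (fun U ↦ Complex.arg (1 - U i i)) μ t
      ≤ ∫ U, (1 + t * Complex.arg (1 - U i i) + ‖U i i‖ ^ 2) ∂μ :=
        integral_mono_of_nonneg (.of_forall fun _ ↦ (exp_pos _).le) (hlin.add hsq) <|
          .of_forall fun U ↦ exp_mul_arg_one_sub_le (entry_norm_bound_of_unitary U.2 i i) ht
    _ = 1 + 1 / n := by
        rw [integral_add hlin hsq, integral_add (integrable_const _) harg, integral_const_mul,
          integral_arg_one_sub_apply, integral_norm_sq_apply, integral_const, probReal_univ,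
          one_smul, mul_zero, add_zero]

end Moments

section Tail

open ProbabilityTheory

variable {n : ℕ}

lemma mgf_phase_le {t : ℝ} (ht : |t| ≤ 1 / 2) (μ : Measure (Matrix.unitaryGroup (Fin n) ℂ))
    [IsProbabilityMeasure μ] [μ.IsHaarMeasure] :
    mgf (fun U ↦ phase U.1) μ t ≤ n + 1 := by
  induction n with
  | zero => simp [phase, mgf]
  | succ n ih =>
    let ν : Measure (Matrix.unitaryGroup (Fin n) ℂ) := Measure.haarMeasure ⊤
    have : IsProbabilityMeasure ν := isProbabilityMeasure_haarMeasure_top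
    let X : Matrix.unitaryGroup (Fin (n + 1)) ℂ → ℝ := fun U ↦ Complex.arg (1 - U 0 0)
    let Y : Matrix.unitaryGroup (Fin (n + 1)) ℂ → ℝ := fun U ↦ phase (unitaryFeedback U).1
    have hY : Measurable Y := measurable_phase_unitaryGroup.comp measurable_unitaryFeedback
    have hindep : IndepFun X Y μ :=
      (indepFun_apply_zero_zero_unitaryFeedback μ).comp
        (Complex.measurable_arg.comp (measurable_const.sub measurable_id))
        measurable_phase_unitaryGroup
    have hmgfY : mgf Y μ t = mgf (fun V ↦ phase V.1) ν t := by
      rw [← map_unitaryFeedback μ ν, mgf_map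
        measurable_unitaryFeedback.aemeasurable
        (measurable_phase_unitaryGroup.const_mul t).exp.aestronglyMeasurable]
      rfl
    calc mgf (fun U ↦ phase U.1) μ t
        = mgf X μ t * mgf Y μ t :=
          hindep.mgf_add' (measurable_arg_one_sub_apply 0).aestronglyMeasurable
            hY.aestronglyMeasurable
      _ ≤ (1 + 1 / (n + 1 : ℕ)) * (n + 1) :=
          mul_le_mul (mgf_arg_one_sub_apply_le μ 0 ht) (hmgfY ▸ ih ν)
            mgf_nonneg (by positivity)
      _ = (n + 1 : ℕ) + 1 := by
          push_cast
          field_simp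

lemma abs_phase_le (A : Matrix (Fin n) (Fin n) ℂ) : |phase A| ≤ n * π := by
  induction n with
  | zero => simp [phase]
  | succ n ih =>
    calc |phase A| ≤ |Complex.arg (1 - A 0 0)| + |phase (feedback A)| := abs_add_le _ _
      _ ≤ π + n * π := add_le_add (Complex.abs_arg_le_pi _) (ih _)
      _ = (n + 1 : ℕ) * π := by
        push_cast
        ring

variable (μ : Measure (Matrix.unitaryGroup (Fin n) ℂ))

lemma integrable_exp_mul_phase [IsFiniteMeasure μ] (t : ℝ) :
    Integrable (fun U ↦ exp (t * phase U.1)) μ :=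
  integrable_exp_mul_of_mem_Icc measurable_phase_unitaryGroup.aemeasurable <|
    .of_forall fun U ↦ abs_le.mp (abs_phase_le U.1)

lemma measureReal_lt_abs_phase_le [IsProbabilityMeasure μ] [μ.IsHaarMeasure] (a : ℝ) :
    μ.real {U | a < |phase U.1|} ≤ 2 * (n + 1) * exp (-a / 2) := by
  have hupper : μ.real {U | a ≤ phase U.1} ≤ exp (-(1 / 2) * a) * (n + 1) :=
    (measure_ge_le_exp_mul_mgf a (by norm_num)
      (integrable_exp_mul_phase μ _)).trans
      (mul_le_mul_of_nonneg_left (mgf_phase_le (by norm_num [abs_of_pos]) μ) (exp_pos _).le)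
  have hlower : μ.real {U | phase U.1 ≤ -a} ≤ exp (-(-1 / 2) * -a) * (n + 1) :=
    (measure_le_le_exp_mul_mgf (-a) (by norm_num)
      (integrable_exp_mul_phase μ _)).trans
      (mul_le_mul_of_nonneg_left (mgf_phase_le (by norm_num [abs_div]) μ) (exp_pos _).le)
  have hsubset : {U : Matrix.unitaryGroup (Fin n) ℂ | a < |phase U.1|} ⊆
      {U | a ≤ phase U.1} ∪ {U | phase U.1 ≤ -a} := 
    fun U (hU : a < |phase U.1|) ↦ (lt_abs.mp hU).imp le_of_lt fun h ↦ (lt_neg.mp h).le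
  calc μ.real {U | a < |phase U.1|}
      ≤ μ.real {U | a ≤ phase U.1} + μ.real {U | phase U.1 ≤ -a} :=
        (measureReal_mono hsubset).trans (measureReal_union_le _ _)
    _ ≤ exp (-(1 / 2) * a) * (n + 1) + exp (-(-1 / 2) * -a) * (n + 1) := add_le_add hupper hlower
    _ = 2 * (n + 1) * exp (-a / 2) := by
        rw [show -(1 / 2) * a = -a / 2 by ring, show -(-1 / 2) * -a = -a / 2 by ring]
        ring

end Tail

section Rotation

variable {n : ℕ}

/-- The scalar matrix `c` as a unitary matrix. -/
noncomputable def unitaryScalar (c : Circle) : Matrix.unitaryGroup (Fin n) ℂ :=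
  ⟨(c : ℂ) • 1, by
    rw [Matrix.mem_unitaryGroup_iff, star_smul, star_one, smul_mul_smul_comm, one_mul]
    simp [Complex.mul_conj]⟩

lemma coe_unitaryScalar_mul (c : Circle) (U : Matrix.unitaryGroup (Fin n) ℂ) :
    (unitaryScalar c * U).1 = (c : ℂ) • U.1 := by
  change ((c : ℂ) • (1 : Matrix (Fin n) (Fin n) ℂ)) * U.1 = (c : ℂ) • U.1
  rw [smul_mul_assoc, one_mul]

lemma countable_setOf_circleExp_mul_eq_one (z : ℂ) :
    {θ : ℝ | (Circle.exp θ : ℂ) * z = 1}.Countable := by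
  obtain hempty | ⟨θ₀, hθ₀⟩ := {θ : ℝ | (Circle.exp θ : ℂ) * z = 1}.eq_empty_or_nonempty
  · exact hempty ▸ Set.countable_empty
  · refine (Set.countable_range fun m : ℤ ↦ θ₀ + m * (2 * π)).mono fun θ hθ ↦ ?_
    have hexp : Circle.exp θ = Circle.exp θ₀ :=
      Circle.ext (mul_right_cancel₀ (right_ne_zero_of_mul_eq_one hθ) (hθ.trans hθ₀.symm))
    obtain ⟨m, hm⟩ := Circle.exp_eq_exp.mp hexp
    exact ⟨m, hm.symm⟩

lemma ae_det_one_sub_circleExp_smul_ne_zero (A : Matrix (Fin n) (Fin n) ℂ) :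
    ∀ᵐ θ : ℝ, (1 - (Circle.exp θ : ℂ) • A).det ≠ 0 := by
  have hroot : ∀ᵐ θ : ℝ, ∀ z ∈ A.charpoly.roots.toFinset, (Circle.exp θ : ℂ) * z ≠ 1 :=
    (Finset.eventually_all _).mpr fun z _ ↦ (countable_setOf_circleExp_mul_eq_one z).ae_notMem _
  filter_upwards [hroot] with θ hθ
  exact (det_one_sub_smul_ne_zero_iff _).mpr fun z hz ↦ hθ z (Multiset.mem_toFinset.mpr hz)

variable (μ : Measure (Matrix.unitaryGroup (Fin n) ℂ)) [μ.IsHaarMeasure]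

lemma ae_det_one_sub_smul_ne_zero (c : Circle) : ∀ᵐ U ∂μ, (1 - (c : ℂ) • U.1).det ≠ 0 := by
  have hclosed : IsClosed {p : ℝ × Matrix.unitaryGroup (Fin n) ℂ |
      (1 - (Circle.exp p.1 : ℂ) • p.2.1).det = 0} :=
    isClosed_eq (by fun_prop) continuous_const
  have hswap : ∀ᵐ θ : ℝ, ∀ᵐ U ∂μ, (1 - (Circle.exp θ : ℂ) • U.1).det ≠ 0 :=
    (Measure.ae_ae_comm hclosed.measurableSet.compl).mpr <|
      .of_forall fun U ↦ ae_det_one_sub_circleExp_smul_ne_zero U.1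
  obtain ⟨θ, hθ⟩ := hswap.exists
  have hshift := (measurePreserving_mul_left μ
    (unitaryScalar (c / Circle.exp θ))).quasiMeasurePreserving.ae hθ
  filter_upwards [hshift] with U hU
  rwa [coe_unitaryScalar_mul, smul_smul, ← Circle.coe_mul, mul_div_cancel] at hU

lemma measureReal_lt_abs_phase_smul_le [IsProbabilityMeasure μ] (c : Circle) (a : ℝ) :
    μ.real {U | a < |phase ((c : ℂ) • U.1)|} ≤ 2 * (n + 1) * exp (-a / 2) := by
  have hmeas : MeasurableSet {U : Matrix.unitaryGroup (Fin n) ℂ | a < |phase U.1|} :=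
    measurableSet_lt measurable_const measurable_phase_unitaryGroup.abs
  have hrot := (measurePreserving_mul_left μ (unitaryScalar c)).measureReal_preimage
    hmeas.nullMeasurableSet
  simp only [Set.preimage_ofPred_eq, coe_unitaryScalar_mul] at hrot
  exact hrot.trans_le (measureReal_lt_abs_phase_le μ a)

end Rotation

section Counting

open scoped Matrix.Norms.L2Operator

/-- The argument of `z` normalised to `[0, 2π)`, the branch used by `eigenAngles`. -/
noncomputable def circleAngle (z : ℂ) : ℝ :=
  if 0 ≤ Complex.arg z then Complex.arg z else Complex.arg z + 2 * π

lemma circleAngle_mem_Ico (z : ℂ) : circleAngle z ∈ Set.Ico 0 (2 * π) := by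
  have hpos := pi_pos
  unfold circleAngle
  split_ifs with h
  · exact ⟨h, by linarith [Complex.arg_le_pi z]⟩
  · exact ⟨by linarith [Complex.neg_pi_lt_arg z], by linarith⟩

lemma exp_circleAngle_mul_I {z : ℂ} (hz : ‖z‖ = 1) :
    Complex.exp (circleAngle z * Complex.I) = z := by
  have harg : Complex.exp (Complex.arg z * Complex.I) = z := by
    simpa [hz] using Complex.norm_mul_exp_arg_mul_I z
  unfold circleAngle
  split_ifs
  · exact harg
  · push_cast
    rw [add_mul, Complex.exp_add, Complex.exp_two_pi_mul_I, mul_one, harg]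

lemma indicator_circleAngle_eq {z : ℂ} (hz : ‖z‖ = 1) (hz1 : z ≠ 1) {θ : ℝ} (h0 : 0 ≤ θ)
    (h2π : θ ≤ 2 * π) (hzθ : (Circle.exp (-θ) : ℂ) * z ≠ 1) :
    (Set.Icc 0 θ).indicator 1 (circleAngle z) =
      (Complex.arg (1 - Circle.exp (-θ) * z) - Complex.arg (1 - z)) / π + θ / (2 * π) := by
  obtain ⟨hα0, hα2π⟩ := circleAngle_mem_Ico z
  have hα := exp_circleAngle_mul_I hz
  set α := circleAngle z
  have hrot : (Circle.exp (-θ) : ℂ) * z = Complex.exp ((α - θ : ℝ) * Complex.I) := by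
    rw [← hα, Circle.coe_exp, ← Complex.exp_add]
    push_cast
    ring_nf
  have hαpos : 0 < α := hα0.lt_of_ne fun h ↦ hz1 (by rw [← hα, ← h]; simp)
  have hαθ : α ≠ θ := fun h ↦ hzθ (by rw [hrot, h]; simp)
  have hargz : Complex.arg (1 - z) = (α - π) / 2 := by
    rw [← hα, arg_one_sub_exp_mul_I hαpos hα2π]
  obtain hlt | hgt := hαθ.lt_or_gt
  · have hperiod : Complex.exp ((α - θ : ℝ) * Complex.I) =
        Complex.exp ((α - θ + 2 * π : ℝ) * Complex.I) := by
      push_cast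
      rw [add_mul _ _ Complex.I, Complex.exp_add, Complex.exp_two_pi_mul_I, mul_one]
    rw [Set.indicator_of_mem (Set.mem_Icc.mpr ⟨hα0, hlt.le⟩), hrot, hperiod,
      arg_one_sub_exp_mul_I (by linarith) (by linarith), hargz, Pi.one_apply]
    field_simp
    ring
  · rw [Set.indicator_of_notMem fun h ↦ hgt.not_ge h.2, hrot,
      arg_one_sub_exp_mul_I (by linarith) (by linarith), hargz]
    field_simp
    ring

lemma card_filter_eq_sum_indicator {α : Type*} (s : Multiset α) (A : Set α)
    [DecidablePred (· ∈ A)] : ((s.filter (· ∈ A)).card : ℝ) = (s.map (A.indicator 1)).sum := by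
  induction s using Multiset.induction with
  | empty => simp
  | cons a s ih =>
    by_cases ha : a ∈ A
    · simp [ha, ih, add_comm]
    · simp [ha, ih]

variable {N : ℕ}

lemma countFun_eq_sum_indicator (U : Matrix.unitaryGroup (Fin N) ℂ) (θ : ℝ) :
    (countFun N U θ : ℝ) =
      (U.1.charpoly.roots.map fun z ↦ (Set.Icc 0 θ).indicator 1 (circleAngle z)).sum := by
  rw [countFun, countAngles, card_filter_eq_sum_indicator, eigenAngles, Multiset.map_map]
  rfl

lemma countFun_eq_phase_sub_phase (U : Matrix.unitaryGroup (Fin N) ℂ) {θ : ℝ} (h0 : 0 ≤ θ)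
    (h2π : θ ≤ 2 * π) (hU : (1 - U.1).det ≠ 0)
    (hrot : (1 - (Circle.exp (-θ) : ℂ) • U.1).det ≠ 0) :
    (countFun N U θ : ℝ) =
      (phase ((Circle.exp (-θ) : ℂ) • U.1) - phase U.1) / π + N * (θ / (2 * π)) := by
  have hnorm := l2_opNorm_le_one_of_mem_unitaryGroup U.2
  have hphase : phase U.1 = (U.1.charpoly.roots.map fun z ↦ Complex.arg (1 - z)).sum := by
    simpa using phase_smul_eq_sum_arg (c := 1) hnorm (by simp) (by simpa using hU)
  have hroots : ∀ z ∈ U.1.charpoly.roots, z ≠ 1 := by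
    simpa using (det_one_sub_smul_ne_zero_iff (A := U.1) 1).mp (by simpa using hU)
  have hroots_rot := (det_one_sub_smul_ne_zero_iff _).mp hrot
  rw [countFun_eq_sum_indicator, phase_smul_eq_sum_arg hnorm (by simp) hrot, hphase,
    Multiset.map_congr rfl fun z hz ↦ indicator_circleAngle_eq
      (norm_eq_one_of_mem_roots_charpoly U.2 hz) (hroots z hz) h0 h2π (hroots_rot z hz),
    Multiset.sum_map_add, Multiset.sum_map_div, Multiset.sum_map_sub, Multiset.map_const',
    Multiset.sum_replicate, card_roots_charpoly, Fintype.card_fin, nsmul_eq_mul]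

lemma abs_countFun_sub_le (U : Matrix.unitaryGroup (Fin N) ℂ) {k : ℕ} (hk : k ∈ Finset.Icc 1 N)
    (hU : (1 - U.1).det ≠ 0)
    (hrot : (1 - (Circle.exp (-(2 * π * k / N)) : ℂ) • U.1).det ≠ 0) :
    |(countFun N U (2 * π * k / N) : ℝ) - k| ≤
      (|phase ((Circle.exp (-(2 * π * k / N)) : ℂ) • U.1)| + |phase U.1|) / π := by
  obtain ⟨hk1, hkN⟩ := Finset.mem_Icc.mp hk
  have hN : (0 : ℝ) < N := by exact_mod_cast hk1.trans hkN
  have h2π : 2 * π * k / N ≤ 2 * π := by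
    rw [div_le_iff₀ hN]
    gcongr
  have hmean : N * (2 * π * k / N / (2 * π)) = (k : ℝ) := by field_simp
  rw [countFun_eq_phase_sub_phase U (by positivity) h2π hU hrot, hmean, add_sub_cancel_right,
    abs_div, abs_of_pos pi_pos]
  gcongr
  exact abs_sub _ _

end Counting

section Deviation

variable {N : ℕ} (μ : Measure (Matrix.unitaryGroup (Fin N) ℂ)) [IsProbabilityMeasure μ]
  [μ.IsHaarMeasure]

lemma maxDev_le {U : Matrix.unitaryGroup (Fin N) ℂ} {a : ℝ} (ha : 0 ≤ a)
    (hU : (1 - U.1).det ≠ 0)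
    (hrot : ∀ k ∈ Finset.Icc 1 N, (1 - (Circle.exp (-(2 * π * k / N)) : ℂ) • U.1).det ≠ 0)
    (hphase : ∀ k ∈ Finset.Icc 1 N,
      |phase ((Circle.exp (-(2 * π * k / N)) : ℂ) • U.1)| ≤ a) :
    maxDev N U ≤ 2 * a / π := by
  refine Real.iSup_le (fun ⟨k, hk⟩ ↦ ?_) (by positivity)
  obtain ⟨hk1, hkN⟩ := Finset.mem_Icc.mp hk
  have hN : N ≠ 0 := by lia
  have hfull : (Circle.exp (-(2 * π * N / N)) : ℂ) = 1 := by
    rw [mul_div_cancel_right₀ _ (Nat.cast_ne_zero.mpr hN), Circle.exp_neg, Circle.exp_two_pi,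
      inv_one, Circle.coe_one]
  have hphaseU : |phase U.1| ≤ a := by
    simpa only [hfull, one_smul] using hphase N (Finset.right_mem_Icc.mpr (hk1.trans hkN))
  calc |(countFun N U (2 * π * k / N) : ℝ) - k|
      ≤ (|phase ((Circle.exp (-(2 * π * k / N)) : ℂ) • U.1)| + |phase U.1|) / π :=
        abs_countFun_sub_le U hk hU (hrot k hk)
    _ ≤ (a + a) / π := by gcongr; exact hphase k hk
    _ = 2 * a / π := by rw [two_mul]

lemma measureReal_lt_maxDev_le {x : ℝ} (hx : 0 ≤ x) :
    μ.real {U | x < maxDev N U} ≤ 2 * N * (N + 1) * exp (-(π * x / 4)) := by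
  let E (k : ℕ) : Set (Matrix.unitaryGroup (Fin N) ℂ) :=
    {U | π * x / 2 < |phase ((Circle.exp (-(2 * π * k / N)) : ℂ) • U.1)|}
  have hcover : {U | x < maxDev N U} ≤ᵐ[μ] ⋃ k ∈ Finset.Icc 1 N, E k := by
    have hdet : ∀ᵐ U ∂μ, (1 - U.1).det ≠ 0 := by
      simpa only [Circle.coe_one, one_smul] using ae_det_one_sub_smul_ne_zero μ 1
    have hdet_rot := (Finset.eventually_all (Finset.Icc 1 N)).mpr fun k _ ↦
      ae_det_one_sub_smul_ne_zero μ (Circle.exp (-(2 * π * k / N)))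
    filter_upwards [hdet, hdet_rot] with U hU hrot
    refine fun hlt : x < maxDev N U ↦ ?_
    by_contra hnot
    have hphase : ∀ k ∈ Finset.Icc 1 N,
        |phase ((Circle.exp (-(2 * π * k / N)) : ℂ) • U.1)| ≤ π * x / 2 := fun k hk ↦
      not_lt.mp fun hUk ↦ hnot (Set.mem_biUnion (t := E) hk hUk)
    have hle := maxDev_le (by positivity) hU hrot hphase
    rw [mul_div_cancel₀ _ two_ne_zero, mul_div_cancel_left₀ _ pi_ne_zero] at hle
    exact hlt.not_ge hle
  calc μ.real {U | x < maxDev N U}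
      ≤ μ.real (⋃ k ∈ Finset.Icc 1 N, E k) :=
        ENNReal.toReal_mono (measure_ne_top _ _) (measure_mono_ae hcover)
    _ ≤ ∑ k ∈ Finset.Icc 1 N, μ.real (E k) := measureReal_biUnion_finset_le _ _
    _ ≤ ∑ _k ∈ Finset.Icc 1 N, 2 * (N + 1) * exp (-(π * x / 2) / 2) :=
        Finset.sum_le_sum fun k _ ↦ measureReal_lt_abs_phase_smul_le μ _ _
    _ = 2 * N * (N + 1) * exp (-(π * x / 4)) := by
        rw [Finset.sum_const, Nat.card_Icc, Nat.add_sub_cancel, nsmul_eq_mul]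
        ring_nf

end Deviation

/-- For a Haar-distributed `N × N` unitary matrix,
`P[max_{1 ≤ k ≤ N} |𝒩_{2πk/N} − k| > 6 log(eN)] ≤ 2/(e³N²)`. -/
theorem max_deviation_tail_bound_specific
    (N : ℕ) (hN : 1 ≤ N) (ℙ : Measure (Matrix.unitaryGroup (Fin N) ℂ))
    (hprob : IsProbabilityMeasure ℙ) (hhaar : ℙ.IsHaarMeasure) :
    (ℙ {U | 6 * Real.log (Real.exp 1 * N) < maxDev N U}).toReal ≤
      2 / (Real.exp 1 ^ 3 * N ^ 2) := by
  have hN1 : (1 : ℝ) ≤ N := by exact_mod_cast hN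
  have hsucc : (N : ℝ) + 1 ≤ exp 1 * N := by nlinarith [add_one_le_exp (1 : ℝ)]
  have hlog : 0 ≤ log (exp 1 * N) := log_nonneg (by linarith)
  have hexp : exp (-(π * (6 * log (exp 1 * N)) / 4)) ≤ ((exp 1 * N) ^ 4)⁻¹ := by
    calc exp (-(π * (6 * log (exp 1 * N)) / 4)) ≤ exp (-(4 * log (exp 1 * N))) :=
          exp_le_exp.mpr (by nlinarith [pi_gt_three])
      _ = ((exp 1 * N) ^ 4)⁻¹ := by
          rw [exp_neg, ← exp_log (show 0 < (exp 1 * N) ^ 4 by positivity), log_pow, Nat.cast_ofNat]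
  calc (ℙ {U | 6 * log (exp 1 * N) < maxDev N U}).toReal
      ≤ 2 * N * (N + 1) * exp (-(π * (6 * log (exp 1 * N)) / 4)) :=
        measureReal_lt_maxDev_le ℙ (by positivity)
    _ ≤ 2 * N * (exp 1 * N) * ((exp 1 * N) ^ 4)⁻¹ := by gcongr
    _ = 2 / (exp 1 ^ 3 * N ^ 2) := by field_simp
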